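/- Let R be a bleached local ring. Then 𝒯₃(R) is quasipolar if and only if 𝒯₃(R[[x]]) is quasipolar. -/

import Mathlib

/-!
Call `a, b` *opposite* when exactly one of them is a unit, and write `δ(x) = a * x - x * b`. For a
local ring `S`, a spectral idempotent of a matrix in `T3 S` must have diagonal entries `0` over the
units and `1` over the nonunits, so all the content lies in the positions `(2,1)` and `(2,3)`.

* If `δ` is bijective for all opposite `a, b`, these off-diagonal entries can be solved for by
  surjectivity (`exists_offDiag`), and injectivity puts the result in the double commutant. Hence
  `T3 S` is quasipolar (`quasipolar_of_bijective`).
* Conversely, apply quasipolarity to the diagonal matrix `diag(b, a, 0)`: if `a * x = x * b` then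
  the matrix with `x` in position `(2,1)` commutes with it, hence with its spectral idempotent,
  which is `0` on one of the two diagonal positions and `1` on the other; this forces `x = 0`
  (`eq_zero_of_quasipolar`).

Over a bleached local ring only injectivity of `δ` is in question. Both directions of the theorem
then follow from transfer between `R` and `R⟦X⟧`: constant series transfer injectivity down, and
`A * X - X * B = E` can be solved coefficient by coefficient, each step involving only `δ` for the
constant coefficients of `A` and `B` (`powerSeries_bijective`).
-/

/-- `q` is quasinilpotent: `1 + q*x` is a unit for every `x` commuting with `q`. -/
def Quasinilpotent {S : Type*} [Ring S] (q : S) : Prop :=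
  ∀ x : S, q * x = x * q → IsUnit (1 + q * x)

/-- `a` is quasipolar: there is an idempotent `p` in the double commutant of `a`
with `a + p` a unit and `a*p` quasinilpotent. -/
def Quasipolar {S : Type*} [Ring S] (a : S) : Prop :=
  ∃ p : S, p * p = p ∧ (∀ y : S, y * a = a * y → p * y = y * p) ∧
    IsUnit (a + p) ∧ Quasinilpotent (a * p)

/-- The subring of `M₃(R)` of matrices with entries only in positions
(1,1), (2,1), (2,2), (2,3), (3,3). -/
def T3 (R : Type*) [Ring R] : Subring (Matrix (Fin 3) (Fin 3) R) where
  carrier := {A | A 0 1 = 0 ∧ A 0 2 = 0 ∧ A 2 0 = 0 ∧ A 2 1 = 0}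
  zero_mem' := by simp
  one_mem' := by simp [Matrix.one_apply]
  add_mem' := by rintro A B ⟨h1,h2,h3,h4⟩ ⟨g1,g2,g3,g4⟩; simp_all
  neg_mem' := by rintro A ⟨h1,h2,h3,h4⟩; simp_all
  mul_mem' := by
    rintro A B ⟨h1,h2,h3,h4⟩ ⟨g1,g2,g3,g4⟩
    refine ⟨?_,?_,?_,?_⟩ <;>
      simp [Matrix.mul_apply, Fin.sum_univ_three, h1,h2,h3,h4,g1,g2,g3,g4]

/-- `R` is bleached: for every `a` in the Jacobson radical and unit `b`,
the maps `x ↦ b*x - x*a` and `x ↦ a*x - x*b` are surjective. -/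
def Bleached (R : Type*) [Ring R] : Prop :=
  ∀ a b : R, a ∈ (⊥ : Ideal R).jacobson → IsUnit b →
    Function.Surjective (fun x : R => b * x - x * a) ∧
      Function.Surjective (fun x : R => a * x - x * b)

/-- `R` is uniquely bleached: for every `a` in the Jacobson radical and unit `b`,
the maps `x ↦ b*x - x*a` and `x ↦ a*x - x*b` are bijective. -/
def UniquelyBleached (R : Type*) [Ring R] : Prop :=
  ∀ a b : R, a ∈ (⊥ : Ideal R).jacobson → IsUnit b →
    Function.Bijective (fun x : R => b * x - x * a) ∧
      Function.Bijective (fun x : R => a * x - x * b)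

/-! ### Noncommutative local rings -/

section LocalRing

variable {S : Type*} [Ring S] [IsLocalRing S]

theorem idem_local {e : S} (he : e * e = e) : e = 0 ∨ e = 1 := by
  rcases IsLocalRing.isUnit_or_isUnit_of_add_one (add_sub_cancel e 1) with h | h
  · exact Or.inr (h.mul_left_cancel (by rw [he, mul_one]))
  · refine Or.inl (h.mul_left_cancel ?_)
    rw [sub_mul, he, one_mul, sub_self, mul_zero]

/-- Local rings are Dedekind finite: a left inverse is a two-sided inverse. -/
theorem isUnit_of_left_inv {a u : S} (h : u * a = 1) : IsUnit a := by
  have he : (a * u) * (a * u) = a * u := by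
    rw [mul_assoc, ← mul_assoc u, h, one_mul]
  rcases idem_local he with h0 | h1
  · have : a = 0 := by
      calc a = a * (u * a) := by rw [h, mul_one]
        _ = 0 := by rw [← mul_assoc, h0, zero_mul]
    rw [this, mul_zero] at h
    exact absurd h zero_ne_one
  · exact ⟨⟨a, u, h1, h⟩, rfl⟩

theorem not_isUnit_mul_left {a : S} (ha : ¬ IsUnit a) (y : S) : ¬ IsUnit (y * a) := by
  rintro ⟨v, hv⟩
  refine ha (isUnit_of_left_inv (u := ↑v⁻¹ * y) ?_)
  rw [mul_assoc, ← hv, Units.inv_mul]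

theorem not_isUnit_mul_right {a : S} (ha : ¬ IsUnit a) (y : S) : ¬ IsUnit (a * y) := by
  rintro ⟨v, hv⟩
  have h : a * (y * ↑v⁻¹) = 1 := by rw [← mul_assoc, ← hv, Units.mul_inv]
  obtain ⟨w, hw⟩ := isUnit_of_left_inv h
  rw [← hw] at h
  exact ha ⟨w⁻¹, (Units.inv_eq_of_mul_eq_one_left h)⟩

theorem isUnit_add_of_not {a b : S} (ha : ¬ IsUnit a) (hb : IsUnit b) : IsUnit (b + a) := by
  have h : IsUnit ((b + a) + -a) := by simpa using hb
  exact (IsLocalRing.isUnit_or_isUnit_of_isUnit_add h).resolve_right fun h' => ha (by simpa using h')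

theorem mem_jacobson_of_not_isUnit {a : S} (ha : ¬ IsUnit a) : a ∈ (⊥ : Ideal S).jacobson := by
  rw [Ideal.mem_jacobson_iff]
  intro y
  obtain ⟨v, hv⟩ := isUnit_add_of_not (not_isUnit_mul_left ha y) isUnit_one
  refine ⟨↑v⁻¹, ?_⟩
  rw [Ideal.mem_bot, mul_assoc, sub_eq_zero]
  calc (↑v⁻¹ : S) * (y * a) + ↑v⁻¹ = ↑v⁻¹ * (1 + y * a) := by rw [mul_add, mul_one, add_comm]
    _ = 1 := by rw [← hv, Units.inv_mul]

theorem surjective_of_bleached (hb : Bleached S) {a b : S} (h : IsUnit a ↔ ¬ IsUnit b) :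
    Function.Surjective (fun x : S => a * x - x * b) := by
  by_cases ha : IsUnit a
  · exact (hb b a (mem_jacobson_of_not_isUnit (h.1 ha)) ha).1
  · exact (hb a b (mem_jacobson_of_not_isUnit ha) (by tauto)).2

end LocalRing

theorem delta_injective {S : Type*} [Ring S] {a b : S} (h : ∀ x : S, a * x = x * b → x = 0) :
    Function.Injective (fun x : S => a * x - x * b) := by
  intro x y hxy
  refine sub_eq_zero.1 (h _ (sub_eq_zero.1 ?_))
  calc a * (x - y) - (x - y) * b = (a * x - x * b) - (a * y - y * b) := by noncomm_ring
    _ = 0 := sub_eq_zero.2 hxy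

/-! ### Arithmetic of `T3 S` -/

section Matrices

variable {S : Type*} [Ring S]

/-- The element of `T3 S` with diagonal `a, b, c`, entry `p` at (2,1) and entry `q` at (2,3). -/
def mkT3 (a b c p q : S) : T3 S :=
  ⟨!![a, 0, 0; p, b, q; 0, 0, c], by simp [T3]⟩

theorem exists_mkT3 (A : T3 S) : ∃ a b c p q, A = mkT3 a b c p q := by
  obtain ⟨M, h1, h2, h3, h4⟩ := A
  refine ⟨M 0 0, M 1 1, M 2 2, M 1 0, M 1 2, Subtype.ext ?_⟩
  ext i j
  fin_cases i <;> fin_cases j <;> simp [mkT3, h1, h2, h3, h4]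

theorem mkT3_inj {a b c p q a' b' c' p' q' : S} :
    mkT3 a b c p q = mkT3 a' b' c' p' q' ↔ a = a' ∧ b = b' ∧ c = c' ∧ p = p' ∧ q = q' := by
  constructor
  · intro h
    have h' := congrArg Subtype.val h
    exact ⟨congrFun (congrFun h' 0) 0, congrFun (congrFun h' 1) 1, congrFun (congrFun h' 2) 2,
      congrFun (congrFun h' 1) 0, congrFun (congrFun h' 1) 2⟩
  · rintro ⟨rfl, rfl, rfl, rfl, rfl⟩
    rfl

theorem mkT3_mul (a b c p q a' b' c' p' q' : S) :
    mkT3 a b c p q * mkT3 a' b' c' p' q' =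
      mkT3 (a * a') (b * b') (c * c') (p * a' + b * p') (b * q' + q * c') := by
  apply Subtype.ext
  ext i j
  fin_cases i <;> fin_cases j <;> simp [mkT3, Matrix.mul_apply, Fin.sum_univ_three]

theorem mkT3_add (a b c p q a' b' c' p' q' : S) :
    mkT3 a b c p q + mkT3 a' b' c' p' q' =
      mkT3 (a + a') (b + b') (c + c') (p + p') (q + q') := by
  apply Subtype.ext
  ext i j
  fin_cases i <;> fin_cases j <;> simp [mkT3]

theorem mkT3_one : (1 : T3 S) = mkT3 1 1 1 0 0 := by
  apply Subtype.ext
  ext i j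
  fin_cases i <;> fin_cases j <;> simp [mkT3]

/-- The inverse has off-diagonal entries `-b⁻¹ * p * a⁻¹` and `-b⁻¹ * q * c⁻¹`. -/
theorem isUnit_mkT3 {a b c p q : S} :
    IsUnit (mkT3 a b c p q) ↔ IsUnit a ∧ IsUnit b ∧ IsUnit c := by
  constructor
  · rintro ⟨⟨A, B, h1, h2⟩, rfl : A = _⟩
    obtain ⟨a', b', c', p', q', rfl⟩ := exists_mkT3 B
    rw [mkT3_mul, mkT3_one, mkT3_inj] at h1 h2
    exact ⟨⟨⟨a, a', h1.1, h2.1⟩, rfl⟩, ⟨⟨b, b', h1.2.1, h2.2.1⟩, rfl⟩,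
      ⟨⟨c, c', h1.2.2.1, h2.2.2.1⟩, rfl⟩⟩
  · rintro ⟨⟨u, rfl⟩, ⟨v, rfl⟩, ⟨w, rfl⟩⟩
    refine ⟨⟨mkT3 u v w p q,
      mkT3 ↑u⁻¹ ↑v⁻¹ ↑w⁻¹ (-(↑v⁻¹ * p * ↑u⁻¹)) (-(↑v⁻¹ * q * ↑w⁻¹)), ?_, ?_⟩, rfl⟩ <;>
    · rw [mkT3_mul, mkT3_one, mkT3_inj]
      simp [mul_assoc]

end Matrices

/-! ### Quasipolarity of `T3 S` and injectivity of `δ` -/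

section Quasipolar

variable {S : Type*} [Ring S]

/-- `e` is the diagonal entry of the spectral idempotent over the diagonal entry `a`: it is `0` if
`a` is a unit and `1` otherwise. -/
def Spec (a e : S) : Prop := (IsUnit a ∧ e = 0) ∨ (¬ IsUnit a ∧ e = 1)

theorem exists_spec (a : S) : ∃ e, Spec a e := by
  by_cases h : IsUnit a
  · exact ⟨0, Or.inl ⟨h, rfl⟩⟩
  · exact ⟨1, Or.inr ⟨h, rfl⟩⟩

theorem Spec.idem {a e : S} (h : Spec a e) : e * e = e := by
  rcases h with ⟨_, rfl⟩ | ⟨_, rfl⟩ <;> simp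

theorem Spec.comm {a e : S} (h : Spec a e) (y : S) : e * y = y * e := by
  rcases h with ⟨_, rfl⟩ | ⟨_, rfl⟩ <;> simp

theorem Spec.isUnit_add [IsLocalRing S] {a e : S} (h : Spec a e) : IsUnit (a + e) := by
  rcases h with ⟨h, rfl⟩ | ⟨h, rfl⟩
  · simpa using h
  · rw [add_comm]
    exact isUnit_add_of_not h isUnit_one

theorem Spec.isUnit_one_add [IsLocalRing S] {a e : S} (h : Spec a e) (y : S) : IsUnit (1 + a * e * y) := by
  rcases h with ⟨h, rfl⟩ | ⟨h, rfl⟩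
  · simp
  · rw [mul_one]
    exact isUnit_add_of_not (not_isUnit_mul_right h y) isUnit_one

/-- The off-diagonal entry `r` of the spectral idempotent in position `(2,1)` (or `(2,3)`) of a
matrix with diagonal entries `a₁` (or `a₃`) and `a₂` and off-diagonal entry `p`. The second clause
is the corresponding entry of the double commutant condition. -/
theorem exists_offDiag
    (H : ∀ a b : S, (IsUnit a ↔ ¬ IsUnit b) → Function.Bijective (fun x : S => a * x - x * b))
    {a₁ a₂ e₁ e₂ : S} (h₁ : Spec a₁ e₁) (h₂ : Spec a₂ e₂) (p : S) :
    ∃ r : S, r * e₁ + e₂ * r = r ∧ ∀ y₁ y₂ y : S, y₁ * a₁ = a₁ * y₁ → y₂ * a₂ = a₂ * y₂ →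
      y * a₁ + y₂ * p = p * y₁ + a₂ * y → r * y₁ + e₂ * y = y * e₁ + y₂ * r := by
  -- `z = r * y₁ - y₂ * r + (e₂ - e₁) * y` is the off-diagonal entry of the commutator of the
  -- idempotent with a matrix commuting with the given one. That commutator has zero diagonal and
  -- again commutes with the given matrix, so `a₂ * z = z * a₁`, and `z = 0` by injectivity.
  rcases h₁ with ⟨u₁, rfl⟩ | ⟨u₁, rfl⟩ <;> rcases h₂ with ⟨u₂, rfl⟩ | ⟨u₂, rfl⟩
  · exact ⟨0, by simp, by simp⟩
  · obtain ⟨hi, hs⟩ := H a₂ a₁ (by tauto)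
    obtain ⟨r, hr⟩ := hs p
    refine ⟨r, by simp, fun y₁ y₂ y hy₁ hy₂ hy => ?_⟩
    have hz : r * y₁ + y - y₂ * r = 0 := by
      apply hi
      simp only [mul_zero, zero_mul, sub_zero] at hr ⊢
      calc a₂ * (r * y₁ + y - y₂ * r) - (r * y₁ + y - y₂ * r) * a₁
          = (a₂ * r * y₁ - r * (y₁ * a₁)) - ((a₂ * y₂) * r - y₂ * r * a₁)
            + (a₂ * y - y * a₁) := by noncomm_ring
        _ = (a₂ * r - r * a₁) * y₁ - y₂ * (a₂ * r - r * a₁) + (a₂ * y - y * a₁) := by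
            rw [hy₁, ← hy₂]; noncomm_ring
        _ = (p * y₁ + a₂ * y) - (y * a₁ + y₂ * p) := by rw [hr]; abel
        _ = 0 := by rw [hy, sub_self]
    simpa using sub_eq_zero.1 hz
  · obtain ⟨hi, hs⟩ := H a₂ a₁ (by tauto)
    obtain ⟨r, hr⟩ := hs (-p)
    refine ⟨r, by simp, fun y₁ y₂ y hy₁ hy₂ hy => ?_⟩
    have hz : r * y₁ - (y + y₂ * r) = 0 := by
      apply hi
      simp only [mul_zero, zero_mul, sub_zero] at hr ⊢
      calc a₂ * (r * y₁ - (y + y₂ * r)) - (r * y₁ - (y + y₂ * r)) * a₁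
          = (a₂ * r * y₁ - r * (y₁ * a₁)) - ((a₂ * y₂) * r - y₂ * r * a₁)
            - (a₂ * y - y * a₁) := by noncomm_ring
        _ = (a₂ * r - r * a₁) * y₁ - y₂ * (a₂ * r - r * a₁) - (a₂ * y - y * a₁) := by
            rw [hy₁, ← hy₂]; noncomm_ring
        _ = (y * a₁ + y₂ * p) - (p * y₁ + a₂ * y) := by rw [hr]; noncomm_ring
        _ = 0 := by rw [hy, sub_self]
    simpa using sub_eq_zero.1 hz
  · exact ⟨0, by simp, by simp⟩

theorem quasipolar_of_bijective [IsLocalRing S]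
    (H : ∀ a b : S, (IsUnit a ↔ ¬ IsUnit b) → Function.Bijective (fun x : S => a * x - x * b))
    (A : T3 S) : Quasipolar A := by
  obtain ⟨a, b, c, p, q, rfl⟩ := exists_mkT3 A
  obtain ⟨e, he⟩ := exists_spec a
  obtain ⟨f, hf⟩ := exists_spec b
  obtain ⟨g, hg⟩ := exists_spec c
  obtain ⟨r, hr, hr'⟩ := exists_offDiag H he hf p
  obtain ⟨s, hs, hs'⟩ := exists_offDiag H hg hf q
  refine ⟨mkT3 e f g r s, ?_, fun Y hY => ?_, ?_, fun Y _ => ?_⟩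
  · rw [mkT3_mul, mkT3_inj]
    exact ⟨he.idem, hf.idem, hg.idem, hr, by rw [add_comm, hs]⟩
  · obtain ⟨y₁, y₂, y₃, y, z, rfl⟩ := exists_mkT3 Y
    rw [mkT3_mul, mkT3_mul, mkT3_inj] at hY ⊢
    obtain ⟨h1, h2, h3, h4, h5⟩ := hY
    refine ⟨he.comm _, hf.comm _, hg.comm _, hr' _ _ _ h1 h2 h4, ?_⟩
    rw [add_comm, hs' _ _ _ h3 h2 (by rw [add_comm, h5, add_comm]), add_comm]
  · rw [mkT3_add, isUnit_mkT3]
    exact ⟨he.isUnit_add, hf.isUnit_add, hg.isUnit_add⟩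
  · obtain ⟨y₁, y₂, y₃, y, z, rfl⟩ := exists_mkT3 Y
    rw [mkT3_mul, mkT3_mul, mkT3_one, mkT3_add, isUnit_mkT3]
    exact ⟨he.isUnit_one_add _, hf.isUnit_one_add _, hg.isUnit_one_add _⟩

theorem eq_zero_of_quasipolar [IsLocalRing S] (H : ∀ A : T3 S, Quasipolar A) {a b : S}
    (hab : IsUnit a ↔ ¬ IsUnit b) {x : S} (hx : a * x = x * b) : x = 0 := by
  obtain ⟨P, hP, hcomm, hunit, hnil⟩ := H (mkT3 b a 0 0 0)
  obtain ⟨e, f, g, r, s, rfl⟩ := exists_mkT3 P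
  rw [mkT3_mul, mkT3_inj] at hP
  have hE := hcomm (mkT3 0 0 0 x 0) (by simp [mkT3_mul, hx])
  have h22 := hcomm (mkT3 0 1 0 0 0) (by simp [mkT3_mul])
  simp only [mkT3_mul, mkT3_inj, mul_zero, zero_mul, mul_one, one_mul, add_zero, zero_add] at hE h22
  obtain ⟨-, -, -, rfl, rfl⟩ := h22
  have hfx : f * x = x * e := hE.2.2.2.1
  rw [mkT3_add, isUnit_mkT3] at hunit
  by_cases ha : IsUnit a
  · -- `a` is a unit and `b` is not, so `f = 0` and `e = 1`.
    have he : e = 1 := (idem_local hP.1).resolve_left fun h => hab.1 ha (by simpa [h] using hunit.1)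
    have hf : f = 0 := by
      refine (idem_local hP.2.1).resolve_right fun h => ?_
      obtain ⟨u, rfl⟩ := ha
      have := hnil (mkT3 0 (-↑u⁻¹) 0 0 0) (by simp [h, mkT3_mul])
      simp [h, mkT3_mul, mkT3_one, mkT3_add, isUnit_mkT3] at this
    simpa [he, hf, eq_comm] using hfx
  · -- `b` is a unit and `a` is not, so `f = 1` and `e = 0`.
    have hb : IsUnit b := by tauto
    have hf : f = 1 := (idem_local hP.2.1).resolve_left fun h => ha (by simpa [h] using hunit.2.1)
    have he : e = 0 := by
      refine (idem_local hP.1).resolve_right fun h => ?_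
      obtain ⟨u, rfl⟩ := hb
      have := hnil (mkT3 (-↑u⁻¹) 0 0 0 0) (by simp [h, mkT3_mul])
      simp [h, mkT3_mul, mkT3_one, mkT3_add, isUnit_mkT3] at this
    simpa [he, hf] using hfx

end Quasipolar

/-! ### Power series -/

section PowerSeries

open PowerSeries

variable {R : Type*} [Ring R]

theorem powerSeries_isLocalRing [IsLocalRing R] : IsLocalRing (PowerSeries R) where
  isUnit_or_isUnit_of_add_one {f g} h := by
    rw [isUnit_iff_constantCoeff, isUnit_iff_constantCoeff]
    apply IsLocalRing.isUnit_or_isUnit_of_add_one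
    rw [← map_add, h, map_one]

/-- The coefficients of the solution `X` of `A * X - X * B = E`, where `g` is a right inverse of
`δ` for the constant coefficients of `A` and `B`. -/
noncomputable def solCoeff (g : R → R) (a b e : ℕ → R) (n : ℕ) : R :=
  g (e n - ∑ k : Fin n, (a (n - k) * solCoeff g a b e k - solCoeff g a b e k * b (n - k)))
termination_by n
decreasing_by all_goals exact k.2

/-- The `n`-th coefficient of `A * X - X * B`, with the contribution of the `n`-th coefficient of
`X` separated from that of the earlier ones. -/
theorem coeff_delta (A B X : PowerSeries R) (n : ℕ) :
    coeff n (A * X - X * B) =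
      ∑ k : Fin n, (coeff (n - k) A * coeff k X - coeff k X * coeff (n - k) B) +
        (constantCoeff A * coeff n X - coeff n X * constantCoeff B) := by
  rw [map_sub, coeff_mul, coeff_mul, ← Finset.Nat.sum_antidiagonal_swap,
    Finset.Nat.sum_antidiagonal_eq_sum_range_succ_mk,
    Finset.Nat.sum_antidiagonal_eq_sum_range_succ_mk, ← Finset.sum_sub_distrib,
    Finset.sum_range_succ, Finset.sum_range]
  simp

theorem powerSeries_bijective {A B : PowerSeries R}
    (h : Function.Bijective (fun x : R => constantCoeff A * x - x * constantCoeff B)) :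
    Function.Bijective (fun X : PowerSeries R => A * X - X * B) := by
  constructor
  · refine delta_injective fun X hX => ?_
    ext n
    induction n using Nat.strong_induction_on with
    | _ n ih =>
      have hn := coeff_delta A B X n
      rw [sub_eq_zero.2 hX, map_zero, Finset.sum_eq_zero, zero_add] at hn
      · exact h.1 (by simpa using hn.symm)
      · intro k _
        simp [show coeff (k : ℕ) X = 0 by simpa using ih k k.2]
  · intro E
    obtain ⟨g, hg⟩ := h.2.hasRightInverse
    refine ⟨PowerSeries.mk
      (solCoeff g (fun n => coeff n A) (fun n => coeff n B) (fun n => coeff n E)), ?_⟩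
    ext n
    simp only [coeff_delta, coeff_mk]
    conv_lhs => enter [2]; rw [solCoeff]
    rw [show ∀ r, constantCoeff A * g r - g r * constantCoeff B = r from hg]
    abel

end PowerSeries

/-- For a bleached local ring `R`, `𝒯₃(R)` is quasipolar iff `𝒯₃(R[[x]])` is
quasipolar. -/
theorem T3_quasipolar_iff_powerSeries {R : Type*} [Ring R] [IsLocalRing R]
    (hb : Bleached R) :
    (∀ A : T3 R, Quasipolar A) ↔ ∀ A : T3 (PowerSeries R), Quasipolar A := by
  have hloc : IsLocalRing (PowerSeries R) := powerSeries_isLocalRing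
  constructor
  · intro H
    refine quasipolar_of_bijective fun A B hAB => powerSeries_bijective ?_
    rw [PowerSeries.isUnit_iff_constantCoeff, PowerSeries.isUnit_iff_constantCoeff] at hAB
    exact ⟨delta_injective fun x hx => eq_zero_of_quasipolar H hAB hx,
      surjective_of_bleached hb hAB⟩
  · intro H
    refine quasipolar_of_bijective fun a b hab =>
      ⟨delta_injective fun x hx => ?_, surjective_of_bleached hb hab⟩
    have hX : PowerSeries.C (R := R) x = 0 := by
      refine eq_zero_of_quasipolar H (a := PowerSeries.C a) (b := PowerSeries.C b) ?_ ?_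
      · simpa [PowerSeries.isUnit_iff_constantCoeff] using hab
      · rw [← map_mul, hx, map_mul]
    exact PowerSeries.C_injective (hX.trans (map_zero _).symm)
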